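/- arXiv:2209.04626 — 3 statements merged into one kernel-verified Lean document; each statement's English description precedes it below -/
import Mathlib

section
/- Let X, ΔX ∈ ℂ^{n×n}, let Q̂, V̂_{XQ} ∈ ℂ^{n×n} be unitary matrices, let Ũ, Σ̃ ∈ ℂ^{n×n}, and let ε_qr, ε̄_J ≥ 0. Assume that ‖ΔX(i,:)‖₂ ≤ ε_qr ‖X(i,:)‖₂ for every row index i, and that there is a matrix F_{XQ} ∈ ℂ^{n×n} with ‖F_{XQ}(i,:)‖₂ ≤ ε̄_J ‖((X+ΔX)Q̂)(i,:)‖₂ for every i such that (X+ΔX)Q̂ + F_{XQ} = Ũ Σ̃ V̂_{XQ}*. Then there exist a unitary matrix V̂_X ∈ ℂ^{n×n} and a matrix F ∈ ℂ^{n×n} such that X + F = Ũ Σ̃ V̂_X* and ‖F(i,:)‖₂ ≤ (ε̄_J(1+ε_qr) + ε_qr) ‖X(i,:)‖₂ for every row index i. (One may take V̂_X = Q̂ V̂_{XQ} and F = ΔX + F_{XQ} Q̂*.) -/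
/-!
Right multiplication by a unitary matrix preserves the Euclidean norm of every row. Hence the
backward error committed on `(X + ΔX) Q` can be carried back through `Q` without any loss:
multiplying `(X + ΔX) Q + F_XQ = U Σ V*` by `Q*` on the right gives
`X + (ΔX + F_XQ Q*) = U Σ (Q V)*`, and the rows of `F_XQ Q*` are bounded by `ε_J` times those of
`X + ΔX`, hence by `ε_J (1 + ε_qr)` times those of `X`.
-/

open Matrix

section RowNorm

variable {m n k 𝕜 : Type*} [Fintype n] [Fintype k] [DecidableEq n] [RCLike 𝕜]

theorem norm_toLp_vecMul_of_mul_conjTranspose_eq_one {Q : Matrix n k 𝕜} (hQ : Q * Qᴴ = 1)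
    (v : n → 𝕜) : ‖WithLp.toLp 2 (v ᵥ* Q)‖ = ‖WithLp.toLp 2 v‖ := by
  have dotProduct_eq : (v ᵥ* Q) ⬝ᵥ star (v ᵥ* Q) = v ⬝ᵥ star v := by
    rw [star_vecMul, dotProduct_mulVec, vecMul_vecMul, hQ, vecMul_one]
  simp only [norm_eq_sqrt_re_inner (𝕜 := 𝕜), EuclideanSpace.inner_toLp_toLp, dotProduct_eq]

theorem norm_toLp_row_mul_of_mul_conjTranspose_eq_one {Q : Matrix n k 𝕜} (hQ : Q * Qᴴ = 1)
    (A : Matrix m n 𝕜) (i : m) : ‖WithLp.toLp 2 ((A * Q) i)‖ = ‖WithLp.toLp 2 (A i)‖ := by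
  rw [mul_apply_eq_vecMul, norm_toLp_vecMul_of_mul_conjTranspose_eq_one hQ]

end RowNorm

/-- Rowwise relative bound `‖E(i,:)‖₂ ≤ ε ‖A(i,:)‖₂`, the sense in which `E` is a small rowwise
backward error for `A`. The matrices share their rows but may have different numbers of columns,
and the sign of `ε` is not constrained. -/
def RowwiseBound {m n k 𝕜 : Type*} [Fintype n] [Fintype k] [RCLike 𝕜] (ε : ℝ)
    (E : Matrix m k 𝕜) (A : Matrix m n 𝕜) : Prop :=
  ∀ i, ‖WithLp.toLp 2 (E i)‖ ≤ ε * ‖WithLp.toLp 2 (A i)‖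

namespace RowwiseBound

variable {m n k l 𝕜 : Type*} [Fintype n] [Fintype k] [Fintype l] [RCLike 𝕜] {ε δ : ℝ}

theorem refl (A : Matrix m n 𝕜) : RowwiseBound 1 A A :=
  fun _ => (one_mul _).ge

theorem add {E F : Matrix m k 𝕜} {A : Matrix m n 𝕜} (hE : RowwiseBound ε E A)
    (hF : RowwiseBound δ F A) : RowwiseBound (ε + δ) (E + F) A := fun i =>
  calc ‖WithLp.toLp 2 ((E + F) i)‖
      ≤ ‖WithLp.toLp 2 (E i)‖ + ‖WithLp.toLp 2 (F i)‖ :=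
        norm_add_le (WithLp.toLp 2 (E i)) (WithLp.toLp 2 (F i))
    _ ≤ ε * ‖WithLp.toLp 2 (A i)‖ + δ * ‖WithLp.toLp 2 (A i)‖ := add_le_add (hE i) (hF i)
    _ = (ε + δ) * ‖WithLp.toLp 2 (A i)‖ := (add_mul _ _ _).symm

theorem trans {E : Matrix m k 𝕜} {B : Matrix m l 𝕜} {A : Matrix m n 𝕜} (hε : 0 ≤ ε)
    (hE : RowwiseBound ε E B) (hB : RowwiseBound δ B A) : RowwiseBound (ε * δ) E A := fun i =>
  calc ‖WithLp.toLp 2 (E i)‖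
      ≤ ε * ‖WithLp.toLp 2 (B i)‖ := hE i
    _ ≤ ε * (δ * ‖WithLp.toLp 2 (A i)‖) := mul_le_mul_of_nonneg_left (hB i) hε
    _ = ε * δ * ‖WithLp.toLp 2 (A i)‖ := (mul_assoc _ _ _).symm

theorem mul_left_iff [DecidableEq k] {E : Matrix m k 𝕜} {A : Matrix m n 𝕜} {Q : Matrix k l 𝕜}
    (hQ : Q * Qᴴ = 1) : RowwiseBound ε (E * Q) A ↔ RowwiseBound ε E A := by
  simp only [RowwiseBound, norm_toLp_row_mul_of_mul_conjTranspose_eq_one hQ]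

theorem mul_right_iff [DecidableEq n] {E : Matrix m k 𝕜} {A : Matrix m n 𝕜} {Q : Matrix n l 𝕜}
    (hQ : Q * Qᴴ = 1) : RowwiseBound ε E (A * Q) ↔ RowwiseBound ε E A := by
  simp only [RowwiseBound, norm_toLp_row_mul_of_mul_conjTranspose_eq_one hQ]

end RowwiseBound

theorem add_mul_conjTranspose_eq_of_mul_add_eq {m n k l R : Type*} [Fintype n] [Fintype k]
    [Fintype l] [DecidableEq n] [Semiring R] [StarRing R] {Y : Matrix m n R} {F : Matrix m k R}
    {Q : Matrix n k R} {M : Matrix m l R} {V : Matrix k l R} (hQ : Q * Qᴴ = 1)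
    (h : Y * Q + F = M * Vᴴ) : Y + F * Qᴴ = M * (Q * V)ᴴ :=
  calc Y + F * Qᴴ = (Y * Q + F) * Qᴴ := by
        rw [Matrix.add_mul, Matrix.mul_assoc Y, hQ, Matrix.mul_one]
    _ = M * (Q * V)ᴴ := by rw [h, conjTranspose_mul, Matrix.mul_assoc]

theorem mixed_precision_rowwise_backward_stability_general
    {m n k 𝕜 : Type*} [Fintype n] [Fintype k] [DecidableEq n] [RCLike 𝕜]
    {X ΔX FXQ : Matrix m n 𝕜} {Q VXQ : Matrix n n 𝕜} {U : Matrix m k 𝕜} {S : Matrix k n 𝕜}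
    {εqr εJ : ℝ} (hεJ : 0 ≤ εJ)
    (hQ : Q ∈ unitaryGroup n 𝕜) (hV : VXQ ∈ unitaryGroup n 𝕜)
    (hΔX : RowwiseBound εqr ΔX X) (hFXQ : RowwiseBound εJ FXQ ((X + ΔX) * Q))
    (hSVD : (X + ΔX) * Q + FXQ = U * S * VXQᴴ) :
    ∃ (VX : Matrix n n 𝕜) (F : Matrix m n 𝕜), VX ∈ unitaryGroup n 𝕜 ∧
      X + F = U * S * VXᴴ ∧ RowwiseBound (εJ * (1 + εqr) + εqr) F X := by
  have hQ_star_right : Q * Qᴴ = 1 := mem_unitaryGroup_iff.1 hQ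
  have hQ_star_left : Qᴴ * Qᴴᴴ = 1 := by
    rw [conjTranspose_conjTranspose]
    exact mem_unitaryGroup_iff'.1 hQ
  have perturbed_bound : RowwiseBound (1 + εqr) (X + ΔX) X := (RowwiseBound.refl X).add hΔX
  have jacobi_bound : RowwiseBound (εJ * (1 + εqr)) (FXQ * Qᴴ) X :=
    (RowwiseBound.mul_left_iff hQ_star_left).2
      (((RowwiseBound.mul_right_iff hQ_star_right).1 hFXQ).trans hεJ perturbed_bound)
  refine ⟨Q * VXQ, ΔX + FXQ * Qᴴ, mul_mem hQ hV, ?_, ?_⟩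
  · rw [← add_assoc, add_mul_conjTranspose_eq_of_mul_add_eq hQ_star_right hSVD]
  · rw [add_comm _ εqr]
    exact hΔX.add jacobi_bound

/-- Deterministic core of Proposition 1: rowwise backward stability after
applying a unitary factor `Q̂` with rowwise backward error `ΔX`, followed by
a rowwise backward stable SVD of `(X + ΔX) Q̂`. -/
theorem mixed_precision_rowwise_backward_stability
    (n : ℕ) (X ΔX Qhat VhatXQ Utilde Stilde FXQ : Matrix (Fin n) (Fin n) ℂ)
    (εqr εJ : ℝ) (hεqr : 0 ≤ εqr) (hεJ : 0 ≤ εJ)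
    (hQ : Qhat ∈ Matrix.unitaryGroup (Fin n) ℂ)
    (hV : VhatXQ ∈ Matrix.unitaryGroup (Fin n) ℂ)
    (hΔX : ∀ i, ‖(WithLp.equiv 2 (Fin n → ℂ)).symm (ΔX i)‖ ≤
      εqr * ‖(WithLp.equiv 2 (Fin n → ℂ)).symm (X i)‖)
    (hFXQ : ∀ i, ‖(WithLp.equiv 2 (Fin n → ℂ)).symm (FXQ i)‖ ≤
      εJ * ‖(WithLp.equiv 2 (Fin n → ℂ)).symm (((X + ΔX) * Qhat) i)‖)
    (hSVD : (X + ΔX) * Qhat + FXQ = Utilde * Stilde * VhatXQ.conjTranspose) :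
    ∃ VhatX F : Matrix (Fin n) (Fin n) ℂ,
      VhatX ∈ Matrix.unitaryGroup (Fin n) ℂ ∧
      X + F = Utilde * Stilde * VhatX.conjTranspose ∧
      ∀ i, ‖(WithLp.equiv 2 (Fin n → ℂ)).symm (F i)‖ ≤
        (εJ * (1 + εqr) + εqr) * ‖(WithLp.equiv 2 (Fin n → ℂ)).symm (X i)‖ :=
  mixed_precision_rowwise_backward_stability_general hεJ hQ hV hΔX hFXQ hSVD
end

section
/- Let X ∈ ℂ^{n×n} be invertible and suppose X = UΣV* where U, V ∈ ℂ^{n×n} are unitary and Σ ∈ ℝ^{n×n} is diagonal with strictly positive diagonal entries. Then X*U = VΣ. Consequently, if X*U = QR is any factorization with Q ∈ ℂ^{n×n} unitary and R ∈ ℂ^{n×n} upper triangular with strictly positive real diagonal entries, then Q = V and R = Σ. -/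
/-!
Cancelling `U` gives `X*U = VΣ`, which is itself a QR factorization, so the claim is the uniqueness
of QR factorizations. As `Q*Q = 1`, the triangular factors `R` and `T` of two factorizations of the
same matrix satisfy `R*R = T*T`. Then `W = TR⁻¹` is unitary and upper triangular, so `W⁻¹ = W*` is
both upper and lower triangular and `W` is diagonal. Since its diagonal entries have modulus one,
`T = WR` forces `R` and `T`, whose diagonals are positive, to have the same diagonal; hence `W = 1`.
-/

open Matrix

theorem isUnit_det_iff_of_isUpperTriangular {m A : Type*} [Fintype m] [LinearOrder m] [CommRing A]
    {R : Matrix m m A} (hR : R.IsUpperTriangular) : IsUnit R.det ↔ ∀ i, IsUnit (R i i) := by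
  rw [det_of_isUpperTriangular hR, IsUnit.prod_univ_iff]

section Unitary

variable {m α A : Type*} [Fintype m] [DecidableEq m] [LinearOrder α] [CommRing A] [StarRing A]

theorem apply_eq_zero_of_blockTriangular_of_mem_unitaryGroup {W : Matrix m m A} {b : m → α}
    (hW : W.BlockTriangular b) (hWU : W ∈ unitaryGroup m A) {i j : m} (hij : b i ≠ b j) :
    W i j = 0 := by
  rcases hij.lt_or_gt with hlt | hgt
  · have hleft : Wᴴ * W = 1 := mem_unitaryGroup_iff'.1 hWU
    let := invertibleOfLeftInverse W Wᴴ hleft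
    have hinv : Wᴴ.BlockTriangular b :=
      inv_eq_left_inv hleft ▸ blockTriangular_inv_of_blockTriangular hW
    exact star_eq_zero.1 (hinv hlt)
  · exact hW hgt

theorem mul_inv_mem_unitaryGroup {R T : Matrix m m A} (hR : IsUnit R.det)
    (h : Rᴴ * R = Tᴴ * T) : T * R⁻¹ ∈ unitaryGroup m A := by
  rw [mem_unitaryGroup_iff', star_eq_conjTranspose]
  calc (T * R⁻¹)ᴴ * (T * R⁻¹) = R⁻¹ᴴ * (Tᴴ * T) * R⁻¹ := by
        simp only [conjTranspose_mul, Matrix.mul_assoc]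
    _ = (R * R⁻¹)ᴴ * (R * R⁻¹) := by
        simp only [← h, conjTranspose_mul, Matrix.mul_assoc]
    _ = 1 := by rw [mul_nonsing_inv R hR, conjTranspose_one, Matrix.one_mul]

end Unitary

theorem conjTranspose_mul_self_of_orthonormal_left {m p q A : Type*} [Fintype m] [Fintype p]
    [DecidableEq m] [Semiring A] [StarRing A] {Q : Matrix p m A} (hQ : Qᴴ * Q = 1)
    (R : Matrix m q A) : (Q * R)ᴴ * (Q * R) = Rᴴ * R := by
  rw [conjTranspose_mul, Matrix.mul_assoc, ← Matrix.mul_assoc Qᴴ, hQ, Matrix.one_mul]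

theorem conjTranspose_mul_of_eq_mul_mul_conjTranspose {m k p q A : Type*} [Fintype m] [Fintype k]
    [Fintype p] [DecidableEq m] [Semiring A] [StarRing A] {X : Matrix p q A} {U : Matrix p m A}
    {L : Matrix m k A} {V : Matrix q k A} (hU : Uᴴ * U = 1) (hX : X = U * L * Vᴴ) :
    Xᴴ * U = V * Lᴴ := by
  rw [hX, conjTranspose_mul, conjTranspose_mul, conjTranspose_conjTranspose, Matrix.mul_assoc,
    Matrix.mul_assoc, hU, Matrix.mul_one]

theorem eq_of_star_mul_self_eq_star_mul_self {A : Type*} [CommRing A] [NoZeroDivisors A]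
    [PartialOrder A] [StarRing A] [StarOrderedRing A] {a b : A} (ha : 0 ≤ a) (hb : 0 ≤ b)
    (h : star a * a = star b * b) : a = b := by
  rw [ha.star_eq, hb.star_eq, mul_self_eq_mul_self_iff] at h
  rcases h with heq | hneg
  · exact heq
  · have hb0 : b = 0 := le_antisymm (neg_nonneg.1 (hneg ▸ ha)) hb
    rw [hneg, hb0, neg_zero]

section Uniqueness

variable {m p q K : Type*} [Fintype m] [LinearOrder m] [Field K] [PartialOrder K]
  [StarRing K] [StarOrderedRing K]

theorem cholesky_unique {R T : Matrix m m K} (hR : R.IsUpperTriangular)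
    (hRpos : ∀ i, 0 < R i i) (hT : T.IsUpperTriangular) (hTpos : ∀ i, 0 < T i i)
    (h : Rᴴ * R = Tᴴ * T) : R = T := by
  have hdet : IsUnit R.det :=
    (isUnit_det_iff_of_isUpperTriangular hR).2 fun i ↦ (hRpos i).ne'.isUnit
  let := invertibleOfIsUnitDet R hdet
  have hWU : T * R⁻¹ ∈ unitaryGroup m K := mul_inv_mem_unitaryGroup hdet h
  have hWtri : (T * R⁻¹).IsUpperTriangular := hT.mul (blockTriangular_inv_of_blockTriangular hR)
  obtain ⟨w, hw⟩ : ∃ w, diagonal w = T * R⁻¹ := ⟨_, IsDiag.diagonal_diag fun i j hij ↦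
    apply_eq_zero_of_blockTriangular_of_mem_unitaryGroup hWtri hWU hij⟩
  have hTR (i j : m) : T i j = w i * R i j := by
    rw [← diagonal_mul, hw, nonsing_inv_mul_cancel_right R T hdet]
  have hwU (i : m) : star (w i) * w i = 1 := by
    have := mem_unitaryGroup_iff'.1 (hw ▸ hWU)
    simpa [star_eq_conjTranspose] using congr_fun₂ this i i
  have hdiag (i : m) : R i i = T i i := by
    refine eq_of_star_mul_self_eq_star_mul_self (hRpos i).le (hTpos i).le ?_
    rw [hTR, star_mul', mul_mul_mul_comm, hwU, one_mul]
  have hw1 (i : m) : w i = 1 :=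
    (mul_eq_right₀ (hRpos i).ne').1 ((hTR i i).symm.trans (hdiag i).symm)
  ext i j
  rw [hTR, hw1, one_mul]

theorem qr_unique [Fintype p] {Q P : Matrix p m K} {R T : Matrix m m K}
    (hQ : Qᴴ * Q = 1) (hR : R.IsUpperTriangular) (hRpos : ∀ i, 0 < R i i)
    (hP : Pᴴ * P = 1) (hT : T.IsUpperTriangular) (hTpos : ∀ i, 0 < T i i)
    (h : Q * R = P * T) : Q = P ∧ R = T := by
  have hgram : Rᴴ * R = Tᴴ * T := by
    rw [← conjTranspose_mul_self_of_orthonormal_left hQ R, h,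
      conjTranspose_mul_self_of_orthonormal_left hP T]
  obtain rfl : R = T := cholesky_unique hR hRpos hT hTpos hgram
  let := invertibleOfIsUnitDet R <|
    (isUnit_det_iff_of_isUpperTriangular hR).2 fun i ↦ (hRpos i).ne'.isUnit
  exact ⟨mul_left_injective_of_invertible R h, rfl⟩

/-- The role of `Σ` is played by a lower triangular `L`, for which `X*U = VL*` is still a QR
factorization. -/
theorem switching_precisions_qr_recovers_V_general [Fintype p] [Fintype q]
    {X : Matrix p q K} {U : Matrix p m K} {V : Matrix q m K} {L : Matrix m m K}
    (hU : Uᴴ * U = 1) (hV : Vᴴ * V = 1) (hL : L.IsLowerTriangular) (hLpos : ∀ i, 0 < L i i)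
    (hX : X = U * L * Vᴴ) :
    Xᴴ * U = V * Lᴴ ∧
      ∀ (Q : Matrix q m K) (R : Matrix m m K), Qᴴ * Q = 1 → R.IsUpperTriangular →
        (∀ i, 0 < R i i) → Xᴴ * U = Q * R → Q = V ∧ R = Lᴴ := by
  have hXU : Xᴴ * U = V * Lᴴ := conjTranspose_mul_of_eq_mul_mul_conjTranspose hU hX
  refine ⟨hXU, fun Q R hQ hR hRpos hQR ↦ ?_⟩
  have hLtri : Lᴴ.IsUpperTriangular := fun _ _ hij ↦
    star_eq_zero.2 (hL (OrderDual.toDual_lt_toDual.2 hij))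
  have hLHpos (i : m) : 0 < Lᴴ i i := by
    rw [conjTranspose_apply, (hLpos i).le.star_eq]
    exact hLpos i
  exact qr_unique hQ hR hRpos hV hLtri hLHpos (hQR.symm.trans hXU)

end Uniqueness

/-- Exact-arithmetic justification of the precision-switching step:
if `X = UΣV*` is an SVD of an invertible matrix with positive singular
values, then `X*U = VΣ`, and any QR factorization `X*U = QR` with `R`
upper triangular with strictly positive real diagonal satisfies
`Q = V` and `R = Σ`. -/
theorem switching_precisions_qr_recovers_V
    (n : ℕ) (X U V : Matrix (Fin n) (Fin n) ℂ)
    (S : Matrix (Fin n) (Fin n) ℝ)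
    (hX : IsUnit X)
    (hU : U ∈ Matrix.unitaryGroup (Fin n) ℂ)
    (hV : V ∈ Matrix.unitaryGroup (Fin n) ℂ)
    (hSdiag : S.IsDiag) (hSpos : ∀ i, 0 < S i i)
    (hSVD : X = U * S.map (Complex.ofReal) * V.conjTranspose) :
    X.conjTranspose * U = V * S.map (Complex.ofReal) ∧
      ∀ Q R : Matrix (Fin n) (Fin n) ℂ,
        Q ∈ Matrix.unitaryGroup (Fin n) ℂ →
        R.BlockTriangular (id : Fin n → Fin n) →
        (∀ i, 0 < (R i i).re ∧ (R i i).im = 0) →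
        X.conjTranspose * U = Q * R →
        Q = V ∧ R = S.map (Complex.ofReal) := by
  have hS : (S.map Complex.ofReal)ᴴ = S.map Complex.ofReal :=
    IsHermitian.map (conjTranspose_eq_transpose_of_trivial S |>.trans hSdiag.isSymm) _
      fun x ↦ (Complex.conj_ofReal x).symm
  open scoped ComplexOrder in
  simpa only [hS, Complex.pos_iff, eq_comm (a := (0 : ℝ)), mem_unitaryGroup_iff',
    star_eq_conjTranspose] using
    switching_precisions_qr_recovers_V_general (L := S.map Complex.ofReal)
      (mem_unitaryGroup_iff'.1 hU) (mem_unitaryGroup_iff'.1 hV)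
      (fun _ _ hij ↦ hSdiag.map rfl (OrderDual.toDual_lt_toDual.1 hij).ne)
      (fun i ↦ Complex.zero_lt_real.2 (hSpos i)) hSVD
end

section
/- Let A ∈ ℂ^{n×n} be Hermitian (A* = A) and suppose A = UΣV* where U, V ∈ ℂ^{n×n} are unitary and Σ ∈ ℝ^{n×n} is diagonal with nonnegative diagonal entries. Then the matrix Ã = U*AU satisfies: for all indices j, k, if Σ_{jj} ≠ Σ_{kk} then Ã_{jk} = 0. In other words, after grouping equal diagonal entries of Σ together, U*AU is block diagonal with one diagonal block for each distinct singular value of A, the size of the block being the multiplicity of that singular value. -/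
/-!
For a normal matrix `A = U S Vᴴ`, the product `A Aᴴ = U (S Sᴴ) Uᴴ` commutes with `A`, so `Uᴴ A U`
commutes with the diagonal matrix `S Sᴴ`. This forces the entries of `Uᴴ A U` between different
diagonal values of `S Sᴴ` to vanish.
-/

open scoped Matrix

section

variable {R m n r s : Type*} [Semiring R] [StarRing R] [Fintype r]

theorem mul_conjTranspose_self_of_eq_mul_mul_conjTranspose [Fintype n] [Fintype s] [DecidableEq s]
    {A : Matrix m n R} {U : Matrix m r R} {S : Matrix r s R} {V : Matrix n s R}
    (hV : Vᴴ * V = 1) (hA : A = U * S * Vᴴ) :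
    A * Aᴴ = U * (S * Sᴴ) * Uᴴ :=
  calc A * Aᴴ = U * S * (Vᴴ * V) * Sᴴ * Uᴴ := by
        simp only [hA, Matrix.conjTranspose_mul, Matrix.conjTranspose_conjTranspose,
          Matrix.mul_assoc]
    _ = U * (S * Sᴴ) * Uᴴ := by rw [hV, Matrix.mul_one, Matrix.mul_assoc U]

theorem commute_conjTranspose_mul_mul [Fintype m] [DecidableEq r] {A : Matrix m m R}
    {U : Matrix m r R} {E : Matrix r r R} (hU : Uᴴ * U = 1) (hA : Commute (U * E * Uᴴ) A) :
    Commute E (Uᴴ * A * U) :=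
  calc E * (Uᴴ * A * U) = (Uᴴ * U) * E * Uᴴ * A * U := by
        simp only [hU, Matrix.one_mul, Matrix.mul_assoc]
    _ = Uᴴ * (U * E * Uᴴ * A) * U := by simp only [Matrix.mul_assoc]
    _ = Uᴴ * (A * (U * E * Uᴴ)) * U := by rw [hA.eq]
    _ = Uᴴ * A * U * E * (Uᴴ * U) := by simp only [Matrix.mul_assoc]
    _ = Uᴴ * A * U * E := by rw [hU, Matrix.mul_one]

end

theorem apply_eq_zero_of_commute_diagonal {R n : Type*} [CommRing R] [NoZeroDivisors R]
    [Fintype n] [DecidableEq n] {d : n → R} {M : Matrix n n R}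
    (hM : Commute (Matrix.diagonal d) M) {j k : n} (hjk : d j ≠ d k) : M j k = 0 := by
  have hentry : d j * M j k = M j k * d k := by
    simpa only [Matrix.diagonal_mul, Matrix.mul_diagonal] using congr_fun₂ hM.eq j k
  have hprod : (d j - d k) * M j k = 0 := by linear_combination hentry
  exact (mul_eq_zero.mp hprod).resolve_left (sub_ne_zero.mpr hjk)

theorem hermitian_svd_block_diagonal_general {R m r : Type*} [CommRing R] [NoZeroDivisors R]
    [StarRing R] [Fintype m] [Fintype r] [DecidableEq r] {A : Matrix m m R} {U V : Matrix m r R}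
    {S : Matrix r r R} (hA : IsStarNormal A) (hU : Uᴴ * U = 1) (hV : Vᴴ * V = 1) (hS : S.IsDiag)
    (hSVD : A = U * S * Vᴴ) {j k : r} (hjk : S j j * star (S j j) ≠ S k k * star (S k k)) :
    (Uᴴ * A * U) j k = 0 := by
  have hSS : S * Sᴴ = Matrix.diagonal fun i ↦ S i i * star (S i i) := by
    rw [← hS.diagonal_diag, Matrix.diagonal_conjTranspose, Matrix.diagonal_mul_diagonal]
    simp
  have hAA : Commute (A * Aᴴ) A := (Commute.refl A).mul_left hA.star_comm_self
  rw [mul_conjTranspose_self_of_eq_mul_mul_conjTranspose hV hSVD, hSS] at hAA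
  exact apply_eq_zero_of_commute_diagonal (commute_conjTranspose_mul_mul hU hAA) hjk

/-- Block-diagonal structure of `U*AU` for a Hermitian matrix `A` with SVD
`A = UΣV*`: entries of `U*AU` coupling different singular values vanish. -/
theorem hermitian_svd_block_diagonal
    (n : ℕ) (A U V : Matrix (Fin n) (Fin n) ℂ)
    (S : Matrix (Fin n) (Fin n) ℝ)
    (hA : A.IsHermitian)
    (hU : U ∈ Matrix.unitaryGroup (Fin n) ℂ)
    (hV : V ∈ Matrix.unitaryGroup (Fin n) ℂ)
    (hSdiag : S.IsDiag) (hSnonneg : ∀ i, 0 ≤ S i i)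
    (hSVD : A = U * S.map (Complex.ofReal) * V.conjTranspose) :
    ∀ j k, S j j ≠ S k k → (U.conjTranspose * A * U) j k = 0 := fun j k hjk ↦
  hermitian_svd_block_diagonal_general hA.isSelfAdjoint.isStarNormal hU.1 hV.1
    (hSdiag.map Complex.ofReal_zero) hSVD <| by
      simpa [← Complex.ofReal_mul, mul_self_inj (hSnonneg j) (hSnonneg k)] using hjk
end
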